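/- Let k → A → H → B → k be an exact sequence of cosemisimple Hopf algebras. Then ∼_B is an equivalence relation on the set B̂ of isomorphism classes of simple right B-comodules, and each of its equivalence classes is finite; the classes are exactly the sets const(U) of simple B-constituents of simple H-comodules U ∈ Ĥ. -/

import Mathlib

/- Common infrastructure: right comodules over coalgebras, simplicity,
cosemisimplicity, subcoalgebras, adjoint coactions, normality, etc. -/

open TensorProduct

universe u

namespace QG

variable (k : Type u) [Field k]

section Coalg

variable (C : Type u) [AddCommGroup C] [Module k C] [Coalgebra k C]

/-- `ρ : V →ₗ[k] V ⊗[k] C` is a (coassociative, counital) right coaction. -/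
structure IsComod {V : Type u} [AddCommGroup V] [Module k V]
    (ρ : V →ₗ[k] V ⊗[k] C) : Prop where
  coassoc : ∀ v : V, ρ.rTensor C (ρ v) =
    (TensorProduct.assoc k V C C).symm.toLinearMap
      ((Coalgebra.comul (R := k) (A := C)).lTensor V (ρ v))
  counit : ∀ v : V, (TensorProduct.rid k V)
      ((Coalgebra.counit (R := k) (A := C)).lTensor V (ρ v)) = v

/-- A submodule `U ≤ V` is a subcomodule if the coaction restricts to it,
i.e. maps `U` into the image of `U ⊗ C` in `V ⊗ C`. -/
def IsSubcomod {V : Type u} [AddCommGroup V] [Module k V]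
    (ρ : V →ₗ[k] V ⊗[k] C) (U : Submodule k V) : Prop :=
  ∀ u ∈ U, ρ u ∈ LinearMap.range ((U.subtype).rTensor C)

/-- A simple subcomodule: a nonzero subcomodule with no nonzero proper
subcomodules below it. -/
def IsSimpleSubcomod {V : Type u} [AddCommGroup V] [Module k V]
    (ρ : V →ₗ[k] V ⊗[k] C) (U : Submodule k V) : Prop :=
  IsSubcomod k C ρ U ∧ U ≠ ⊥ ∧
    ∀ U' : Submodule k V, U' ≤ U → IsSubcomod k C ρ U' → U' = ⊥ ∨ U' = U

/-- A comodule is simple if it is simple as a subcomodule of itself. -/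
def IsSimpleComod {V : Type u} [AddCommGroup V] [Module k V]
    (ρ : V →ₗ[k] V ⊗[k] C) : Prop :=
  IsSimpleSubcomod k C ρ ⊤

/-- Morphisms of right `C`-comodules. -/
def IsComodHom {V W : Type u} [AddCommGroup V] [Module k V]
    [AddCommGroup W] [Module k W]
    (ρV : V →ₗ[k] V ⊗[k] C) (ρW : W →ₗ[k] W ⊗[k] C) (f : V →ₗ[k] W) : Prop :=
  ρW ∘ₗ f = (f.rTensor C) ∘ₗ ρV

/-- `C` is cosemisimple: every right `C`-comodule is an (internal) direct sum
of simple subcomodules. -/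
def IsCosemisimple : Prop :=
  ∀ (V : Type u) [AddCommGroup V] [Module k V]
    (ρ : V →ₗ[k] V ⊗[k] C), IsComod k C ρ →
    ∃ (ι : Type u) (U : ι → Submodule k V),
      (∀ i, IsSimpleSubcomod k C ρ (U i)) ∧
      iSupIndep U ∧ (⨆ i, U i) = ⊤

/-- Subcoalgebras of `C`, as submodules. -/
def IsSubcoalgebra (D : Submodule k C) : Prop :=
  ∀ x ∈ D, Coalgebra.comul (R := k) x ∈
    LinearMap.range (TensorProduct.map D.subtype D.subtype)

/-- Simple subcoalgebras: nonzero ones with no nonzero proper subcoalgebras. -/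
def IsSimpleSubcoalgebra (D : Submodule k C) : Prop :=
  IsSubcoalgebra k C D ∧ D ≠ ⊥ ∧
    ∀ D' : Submodule k C, D' ≤ D → IsSubcoalgebra k C D' → D' = ⊥ ∨ D' = D

/-- The coefficient space of a comodule: the smallest submodule `D ≤ C` such
that the coaction factors through `V ⊗ D`.  For a simple comodule this is its
coefficient coalgebra. -/
def coeffSpace {V : Type u} [AddCommGroup V] [Module k V]
    (ρ : V →ₗ[k] V ⊗[k] C) : Submodule k C :=
  sInf {D : Submodule k C | ∀ v : V, ρ v ∈ LinearMap.range ((D.subtype).lTensor V)}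

/-- Corestriction of a coaction along a linear map of coalgebras `π : C → D`. -/
noncomputable def cores {D : Type u} [AddCommGroup D] [Module k D]
    {V : Type u} [AddCommGroup V] [Module k V]
    (π : C →ₗ[k] D) (ρ : V →ₗ[k] V ⊗[k] C) : V →ₗ[k] V ⊗[k] D :=
  (π.lTensor V) ∘ₗ ρ

end Coalg

section Bialg

variable (H : Type u) [Ring H] [Bialgebra k H]

/-- An invariant vector for a coaction of a bialgebra. -/
def IsInvariant {V : Type u} [AddCommGroup V] [Module k V]
    (ρ : V →ₗ[k] V ⊗[k] H) (v : V) : Prop :=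
  ρ v = v ⊗ₜ[k] (1 : H)

/-- The tensor product coaction on `V ⊗ W` for a bialgebra `H`:
`v ⊗ w ↦ (v₀ ⊗ w₀) ⊗ v₁w₁`. -/
noncomputable def tensorCoact {V W : Type u}
    [AddCommGroup V] [Module k V] [AddCommGroup W] [Module k W]
    (ρV : V →ₗ[k] V ⊗[k] H) (ρW : W →ₗ[k] W ⊗[k] H) :
    (V ⊗[k] W) →ₗ[k] (V ⊗[k] W) ⊗[k] H :=
  ((LinearMap.mul' k H).lTensor (V ⊗[k] W)) ∘ₗ
    (TensorProduct.tensorTensorTensorComm k V H W H).toLinearMap ∘ₗ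
    (TensorProduct.map ρV ρW)

/-- `O(G/H)`: the right coinvariants `{x | (id ⊗ π)Δ(x) = x ⊗ 1}` of a
quotient map `π`. -/
noncomputable def quotientSpaceLeft {B : Type u} [AddCommGroup B] [Module k B] [One B]
    (π : H →ₗ[k] B) : Submodule k H :=
  LinearMap.ker ((π.lTensor H) ∘ₗ (Coalgebra.comul (R := k) (A := H)) -
    (TensorProduct.mk k H B).flip 1)

/-- `O(H\G)`: the left coinvariants `{x | (π ⊗ id)Δ(x) = 1 ⊗ x}`. -/
noncomputable def quotientSpaceRight {B : Type u} [AddCommGroup B] [Module k B] [One B]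
    (π : H →ₗ[k] B) : Submodule k H :=
  LinearMap.ker ((π.rTensor H) ∘ₗ (Coalgebra.comul (R := k) (A := H)) -
    (TensorProduct.mk k B H) 1)

end Bialg

section Hopf

variable (H : Type u) [Ring H] [HopfAlgebra k H]

/-- Iterated comultiplication `x ↦ x₁ ⊗ (x₂ ⊗ x₃)`. -/
noncomputable def comul2 : H →ₗ[k] H ⊗[k] (H ⊗[k] H) :=
  ((Coalgebra.comul (R := k) (A := H)).lTensor H) ∘ₗ (Coalgebra.comul (R := k) (A := H))

/-- The right adjoint coaction `x ↦ x₂ ⊗ S(x₁)x₃`. -/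
noncomputable def adR : H →ₗ[k] H ⊗[k] H :=
  ((LinearMap.mul' k H).lTensor H) ∘ₗ
    (TensorProduct.assoc k H H H).toLinearMap ∘ₗ
    (((TensorProduct.comm k H H).toLinearMap).rTensor H) ∘ₗ
    (TensorProduct.assoc k H H H).symm.toLinearMap ∘ₗ
    ((HopfAlgebra.antipode (R := k) (A := H)).rTensor (H ⊗[k] H)) ∘ₗ
    comul2 k H

/-- The left adjoint coaction `x ↦ x₁S(x₃) ⊗ x₂` (a left coaction, with the
coacting tensorand on the left). -/
noncomputable def adL : H →ₗ[k] H ⊗[k] H :=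
  ((LinearMap.mul' k H).rTensor H) ∘ₗ
    (TensorProduct.assoc k H H H).symm.toLinearMap ∘ₗ
    (((TensorProduct.comm k H H).toLinearMap).lTensor H) ∘ₗ
    (((HopfAlgebra.antipode (R := k) (A := H)).lTensor H).lTensor H) ∘ₗ
    comul2 k H

variable {B : Type u} [AddCommGroup B] [Module k B]

/-- `π : O(G) → O(H)` is right-normal: it is a morphism of right
`O(G)`-comodules for the right adjoint coaction, i.e. the right adjoint
coaction descends along `π`. -/
def IsRightNormal (π : H →ₗ[k] B) : Prop :=
  ∃ ρ : B →ₗ[k] B ⊗[k] H, ρ ∘ₗ π = (π.rTensor H) ∘ₗ adR k H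

/-- `π : O(G) → O(H)` is left-normal: the left adjoint coaction descends
along `π`. -/
def IsLeftNormal (π : H →ₗ[k] B) : Prop :=
  ∃ lam : B →ₗ[k] H ⊗[k] B, lam ∘ₗ π = (π.lTensor H) ∘ₗ adL k H

end Hopf

end QG

namespace QG

variable (k : Type u) [Field k]

section Coalg2

variable (C : Type u) [AddCommGroup C] [Module k C] [Coalgebra k C]

/-- A bundled simple right `C`-comodule. -/
structure SimpleComodule where
  V : Type u
  [addCommGroup : AddCommGroup V]
  [module : Module k V]
  ρ : V →ₗ[k] V ⊗[k] C
  isComod : IsComod k C ρ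
  isSimple : IsSimpleComod k C ρ

attribute [instance] SimpleComodule.addCommGroup SimpleComodule.module

/-- A simple comodule `(T, ρT)` is a constituent of a comodule `(V, ρV)`
(over a cosemisimple coalgebra) iff there is a nonzero comodule map `T → V`. -/
def IsConstituent {T V : Type u} [AddCommGroup T] [Module k T]
    [AddCommGroup V] [Module k V]
    (ρT : T →ₗ[k] T ⊗[k] C) (ρV : V →ₗ[k] V ⊗[k] C) : Prop :=
  ∃ f : T →ₗ[k] V, f ≠ 0 ∧ IsComodHom k C ρT ρV f

/-- Isomorphism of (simple) comodules. -/
def comodIsoRel (X Y : SimpleComodule k C) : Prop :=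
  ∃ e : X.V ≃ₗ[k] Y.V, IsComodHom k C X.ρ Y.ρ e.toLinearMap

/-- The set `Ĉ` of isomorphism classes of simple right `C`-comodules. -/
def SimpleComodQuot := Quot (comodIsoRel k C)

/-- The isomorphism class of a simple comodule. -/
def SimpleComodule.cls (X : SimpleComodule k C) : SimpleComodQuot k C :=
  Quot.mk _ X

/-- Group-like elements of a coalgebra; these correspond to the
one-dimensional comodules, i.e. to characters. -/
def IsGroupLike (a : C) : Prop :=
  Coalgebra.counit (R := k) (A := C) a = (1 : k) ∧
    Coalgebra.comul (R := k) (A := C) a = a ⊗ₜ[k] a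

/-- A linear map `φ : C → Z` out of a coalgebra is central if
`φ(x₁) ⊗ x₂ = φ(x₂) ⊗ x₁`. -/
def IsCentralMap {Z : Type u} [AddCommGroup Z] [Module k Z] (φ : C →ₗ[k] Z) : Prop :=
  (φ.rTensor C) ∘ₗ (Coalgebra.comul (R := k) (A := C)) =
    (φ.rTensor C) ∘ₗ (TensorProduct.comm k C C).toLinearMap ∘ₗ
      (Coalgebra.comul (R := k) (A := C))

/-- The simple comodule `X` has "central character" `g` with respect to the
quotient map `γ : C → Z`: corestricted along `γ`, the coaction on `X` is a sum
of copies of the character `g`. -/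
def HasCentralChar {Z : Type u} [AddCommGroup Z] [Module k Z]
    (γ : C →ₗ[k] Z) (X : SimpleComodule k C) (g : Z) : Prop :=
  ∀ v : X.V, cores k C γ X.ρ v = v ⊗ₜ[k] g

end Coalg2

/-- The k-span of the set of products `g * a`, `a ∈ Am`; for `Am` a submodule
this is the left ideal generated by `Am`. -/
def leftIdealGen {G : Type u} [Ring G] [Module k G] (Am : Submodule k G) :
    Submodule k G :=
  Submodule.span k {x : G | ∃ g : G, ∃ a ∈ Am, x = g * a}

end QG

namespace QG

variable (k : Type u) [Field k]
variable {H B : Type u} [Ring H] [HopfAlgebra k H] [Ring B] [HopfAlgebra k B]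

/-- `const(U) ⊆ B̂`: the set of isomorphism classes of simple `B`-comodule
constituents of the corestriction of the simple `H`-comodule `U` along `π`. -/
noncomputable def constHat (π : H →ₐc[k] B) (U : SimpleComodule k H) :
    Set (SimpleComodQuot k B) :=
  {x | ∃ X : SimpleComodule k B, X.cls = x ∧
    IsConstituent k B X.ρ (cores k H (π : H →ₗ[k] B) U.ρ)}

/-- The relation `∼_B` on `B̂`: two simple `B`-comodules are related iff they
are both constituents of (the corestriction of) one and the same simple
`H`-comodule. -/
noncomputable def relSimB (π : H →ₐc[k] B) :
    SimpleComodQuot k B → SimpleComodQuot k B → Prop :=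
  fun x y => ∃ U : SimpleComodule k H, x ∈ constHat k π U ∧ y ∈ constHat k π U

/-- The relation `∼_H` on `Ĥ`: nonzero `B`-comodule morphisms exist between
corestrictions, i.e. the corestrictions share a simple constituent. -/
noncomputable def relSimH (π : H →ₐc[k] B) :
    SimpleComodQuot k H → SimpleComodQuot k H → Prop :=
  fun x y => ∃ X Y : SimpleComodule k H, X.cls = x ∧ Y.cls = y ∧
    ∃ f : X.V →ₗ[k] Y.V, f ≠ 0 ∧
      IsComodHom k B (cores k H (π : H →ₗ[k] B) X.ρ)
        (cores k H (π : H →ₗ[k] B) Y.ρ) f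

/-- The map `Ĥ → {finite subsets of B̂}` sending a simple `H`-comodule to its
set of simple `B`-constituents. -/
noncomputable def constMap (π : H →ₐc[k] B) :
    SimpleComodQuot k H → Set (SimpleComodQuot k B) :=
  fun x => {y | ∃ U : SimpleComodule k H, U.cls = x ∧ y ∈ constHat k π U}

end QG

/-! For finite-dimensional `H`-comodules `V`, `W`, the space `Hom(V, W)` is an `H`-comodule whose
`B`-coinvariants are the `B`-comodule maps. The right coinvariants of `π : H → B` form the Hopf
subalgebra `A`, on which `π` is trivial, so they are also left coinvariant; this normality makes
`Hom_B(V, W)` an `H`-subcomodule of `Hom(V, W)`. Hence the images of the `B`-maps `V → W` together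
span an `H`-subcomodule of `W`, which is all of `W` as soon as `W` is simple and a nonzero `B`-map
exists. So if two simple `H`-comodules `U`, `U'` share one simple `B`-constituent, each
`B`-constituent of `U'` receives a nonzero `B`-map from `U`, and `const(U) = const(U')`.

These sets are finite because simple comodules are finite-dimensional. They cover `B̂`: a simple
`B`-comodule `X` embeds by its coaction into the cofree comodule `X ⊗ B`, so by cosemisimplicity it
is a quotient of `X ⊗ B` and therefore of the cofree `H`-comodule `X ⊗ H`. -/

namespace QG

section Comodule

variable {k : Type u} [Field k] {C : Type u} [AddCommGroup C] [Module k C]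
variable {V W X : Type u} [AddCommGroup V] [Module k V] [AddCommGroup W] [Module k W]
  [AddCommGroup X] [Module k X]
variable {ρV : V →ₗ[k] V ⊗[k] C} {ρW : W →ₗ[k] W ⊗[k] C} {ρX : X →ₗ[k] X ⊗[k] C}
  {f : V →ₗ[k] W} {g : W →ₗ[k] X} {U : Submodule k V}

lemma IsComodHom.apply (hf : IsComodHom k C ρV ρW f) (v : V) :
    ρW (f v) = f.rTensor C (ρV v) :=
  LinearMap.congr_fun hf v

lemma isComodHom_id (ρ : V →ₗ[k] V ⊗[k] C) : IsComodHom k C ρ ρ LinearMap.id := by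
  rw [IsComodHom, LinearMap.rTensor_id, LinearMap.id_comp, LinearMap.comp_id]

lemma IsComodHom.comp (hg : IsComodHom k C ρW ρX g) (hf : IsComodHom k C ρV ρW f) :
    IsComodHom k C ρV ρX (g ∘ₗ f) := by
  rw [IsComodHom, ← LinearMap.comp_assoc, hg, LinearMap.comp_assoc, hf, ← LinearMap.comp_assoc,
    LinearMap.rTensor_comp]

lemma IsComodHom.of_comp_injective (hg : IsComodHom k C ρW ρX g) (hinj : Function.Injective g)
    (hgf : IsComodHom k C ρV ρX (g ∘ₗ f)) : IsComodHom k C ρV ρW f := by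
  ext v
  apply Module.Flat.rTensor_preserves_injective_linearMap (M := C) g hinj
  rw [LinearMap.comp_apply, LinearMap.comp_apply, ← hg.apply, ← LinearMap.rTensor_comp_apply]
  exact hgf.apply v

lemma IsComodHom.symm {e : V ≃ₗ[k] W} (he : IsComodHom k C ρV ρW e.toLinearMap) :
    IsComodHom k C ρW ρV e.symm.toLinearMap :=
  he.of_comp_injective e.injective <| by rw [e.comp_symm]; exact isComodHom_id ρW

lemma IsComodHom.isSubcomod_ker (hf : IsComodHom k C ρV ρW f) :
    IsSubcomod k C ρV (LinearMap.ker f) := by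
  intro v hv
  refine (Module.Flat.rTensor_exact C (LinearMap.exact_subtype_ker_map f) _).mp ?_
  rw [← hf.apply, LinearMap.mem_ker.mp hv, map_zero]

lemma isSubcomod_top (ρ : V →ₗ[k] V ⊗[k] C) : IsSubcomod k C ρ ⊤ := fun v _ =>
  LinearMap.rTensor_surjective C (fun x => ⟨⟨x, Submodule.mem_top⟩, rfl⟩) (ρ v)

lemma IsSubcomod.map (hU : IsSubcomod k C ρV U) (hf : IsComodHom k C ρV ρW f) :
    IsSubcomod k C ρW (U.map f) := by
  rintro _ ⟨v, hv, rfl⟩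
  obtain ⟨t, ht⟩ := hU v hv
  refine ⟨(f.submoduleMap U).rTensor C t, ?_⟩
  rw [hf.apply, ← ht, ← LinearMap.rTensor_comp_apply, ← LinearMap.rTensor_comp_apply]
  rfl

lemma IsSimpleComod.eq_top (hV : IsSimpleComod k C ρV) (hU : IsSubcomod k C ρV U) (hne : U ≠ ⊥) :
    U = ⊤ :=
  (hV.2.2 U le_top hU).resolve_left hne

lemma IsSimpleComod.nontrivial (hV : IsSimpleComod k C ρV) : Nontrivial V :=
  Submodule.nontrivial_iff k |>.mp ⟨⊤, ⊥, hV.2.1⟩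

lemma IsSimpleComod.injective_of_ne_zero (hV : IsSimpleComod k C ρV)
    (hf : IsComodHom k C ρV ρW f) (hne : f ≠ 0) : Function.Injective f := by
  by_contra h
  exact hne (LinearMap.ker_eq_top.mp (hV.eq_top hf.isSubcomod_ker (mt LinearMap.ker_eq_bot.mp h)))

lemma IsSimpleComod.surjective_of_ne_zero (hW : IsSimpleComod k C ρW)
    (hf : IsComodHom k C ρV ρW f) (hne : f ≠ 0) : Function.Surjective f := by
  rw [← LinearMap.range_eq_top, LinearMap.range_eq_map]
  refine hW.eq_top ((isSubcomod_top ρV).map hf) ?_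
  rwa [← LinearMap.range_eq_map, Ne, LinearMap.range_eq_bot]

lemma IsSimpleComod.exists_linearEquiv (hV : IsSimpleComod k C ρV) (hW : IsSimpleComod k C ρW)
    (hf : IsComodHom k C ρV ρW f) (hne : f ≠ 0) : ∃ e : V ≃ₗ[k] W, e.toLinearMap = f :=
  ⟨LinearEquiv.ofBijective f ⟨hV.injective_of_ne_zero hf hne, hW.surjective_of_ne_zero hf hne⟩,
    rfl⟩

variable [Coalgebra k C]

variable (C W) in
/-- The coaction `id ⊗ Δ` of the cofree `C`-comodule `W ⊗ C` on a vector space `W`. -/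
noncomputable def cofree : W ⊗[k] C →ₗ[k] (W ⊗[k] C) ⊗[k] C :=
  (TensorProduct.assoc k W C C).symm.toLinearMap ∘ₗ (Coalgebra.comul (R := k)).lTensor W

variable (C W) in
/-- The map `id ⊗ ε`, under which linear maps to `W` correspond to comodule maps to the cofree
comodule `W ⊗ C`. -/
noncomputable def cofreeCounit : W ⊗[k] C →ₗ[k] W :=
  (TensorProduct.rid k W).toLinearMap ∘ₗ (Coalgebra.counit (R := k)).lTensor W

lemma cofreeCounit_comp_rTensor (f : V →ₗ[k] W) :
    cofreeCounit C W ∘ₗ f.rTensor C = f ∘ₗ cofreeCounit C V := by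
  ext v c
  simp [cofreeCounit]

lemma isComod_iff : IsComod k C ρV ↔
    IsComodHom k C ρV (cofree C V) ρV ∧ cofreeCounit C V ∘ₗ ρV = LinearMap.id :=
  ⟨fun h => ⟨LinearMap.ext fun v => (h.coassoc v).symm, LinearMap.ext h.counit⟩,
    fun h => ⟨fun v => (h.1.apply v).symm, LinearMap.congr_fun h.2⟩⟩

lemma IsComod.isComodHom_cofree (hV : IsComod k C ρV) : IsComodHom k C ρV (cofree C V) ρV :=
  (isComod_iff.mp hV).1

lemma IsComod.injective (hV : IsComod k C ρV) : Function.Injective ρV :=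
  Function.LeftInverse.injective (g := cofreeCounit C V) hV.counit

lemma isComodHom_rTensor_cofree (f : V →ₗ[k] W) :
    IsComodHom k C (cofree C V) (cofree C W) (f.rTensor C) := by
  rw [IsComodHom, cofree, cofree, LinearMap.comp_assoc, LinearMap.lTensor_comp_rTensor,
    ← LinearMap.rTensor_comp_lTensor, LinearMap.rTensor_tensor]
  ext
  simp

lemma isComodHom_mk_cofree (w : W) :
    IsComodHom k C Coalgebra.comul (cofree C W) (TensorProduct.mk k W C w) := by
  have h : (TensorProduct.assoc k W C C).symm.toLinearMap ∘ₗ TensorProduct.mk k W (C ⊗[k] C) w =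
      (TensorProduct.mk k W C w).rTensor C := TensorProduct.ext' fun _ _ => rfl
  rw [IsComodHom, ← h]
  rfl

lemma isComod_comul : IsComod k C (Coalgebra.comul (R := k) (A := C)) where
  coassoc c := (Coalgebra.coassoc_symm_apply c).symm
  counit c := by rw [Coalgebra.lTensor_counit_comul, TensorProduct.rid_tmul, one_smul]

lemma isComodHom_cofree_of_forall_mk {h : W ⊗[k] C →ₗ[k] X}
    (hh : ∀ w, IsComodHom k C Coalgebra.comul ρX (h ∘ₗ TensorProduct.mk k W C w)) :
    IsComodHom k C (cofree C W) ρX h := by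
  refine TensorProduct.ext (LinearMap.ext fun w => ?_)
  have hw := hh w
  rw [IsComodHom, LinearMap.rTensor_comp, LinearMap.comp_assoc, ← isComodHom_mk_cofree w] at hw
  exact hw

lemma isComod_cofree : IsComod k C (cofree C W) := by
  refine isComod_iff.mpr ⟨isComodHom_cofree_of_forall_mk fun w => ?_,
    TensorProduct.ext' fun w c => ?_⟩
  · rw [isComodHom_mk_cofree w]
    exact (isComodHom_rTensor_cofree _).comp isComod_comul.isComodHom_cofree
  · rw [LinearMap.comp_apply, ← TensorProduct.mk_apply, (isComodHom_mk_cofree w).apply,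
      ← LinearMap.comp_apply, cofreeCounit_comp_rTensor]
    simp [cofreeCounit]

lemma IsComodHom.isComod_of_injective (hf : IsComodHom k C ρV ρW f) (hinj : Function.Injective f)
    (hW : IsComod k C ρW) : IsComod k C ρV := by
  refine isComod_iff.mpr ⟨?_, LinearMap.ext fun v => hinj ?_⟩
  · refine (isComodHom_rTensor_cofree f).of_comp_injective
      (Module.Flat.rTensor_preserves_injective_linearMap f hinj) ?_
    rw [← hf]
    exact hW.isComodHom_cofree.comp hf
  · have hcounit := LinearMap.congr_fun (cofreeCounit_comp_rTensor (C := C) f) (ρV v)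
    rw [LinearMap.comp_apply, ← hf.apply] at hcounit
    exact hcounit.symm.trans (LinearMap.congr_fun (isComod_iff.mp hW).2 (f v))

lemma IsSimpleComod.eq_zero_of_rTensor_coact_eq_zero (hV : IsSimpleComod k C ρV)
    (hρ : IsComod k C ρV) {v : V} (hv : v ≠ 0) (hfv : f.rTensor C (ρV v) = 0) : f = 0 := by
  have hker := ((isComodHom_rTensor_cofree f).comp hρ.isComodHom_cofree).isSubcomod_ker
  have hzero := LinearMap.ker_eq_top.mp <|
    hV.eq_top hker ((Submodule.ne_bot_iff _).mpr ⟨v, hfv, hv⟩)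
  rw [← f.comp_id, ← (isComod_iff.mp hρ).2, ← LinearMap.comp_assoc, ← cofreeCounit_comp_rTensor,
    LinearMap.comp_assoc, hzero, LinearMap.comp_zero]

lemma IsSimpleComod.finite (hV : IsSimpleComod k C ρV) (hρ : IsComod k C ρV) :
    Module.Finite k V := by
  have := hV.nontrivial
  obtain ⟨v, hv⟩ := exists_ne (0 : V)
  obtain ⟨M, hM, hvM⟩ := TensorProduct.exists_finite_submodule_left_of_setFinite {ρV v}
    (Set.finite_singleton _)
  obtain ⟨t, ht⟩ := hvM rfl
  have hmkQ : M.mkQ = 0 := by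
    refine hV.eq_zero_of_rTensor_coact_eq_zero hρ hv ?_
    rw [← ht, ← LinearMap.rTensor_comp_apply, LinearMap.range_le_ker_iff.mp (by simp),
      LinearMap.rTensor_zero, LinearMap.zero_apply]
  have htop : M = ⊤ := by rw [← M.ker_mkQ, hmkQ, LinearMap.ker_zero]
  exact Module.finite_def.mpr (htop ▸ Module.Finite.iff_fg.mp hM)

end Comodule

section Restrict

variable {k : Type u} [Field k] {C : Type u} [AddCommGroup C] [Module k C]
variable {V : Type u} [AddCommGroup V] [Module k V] {ρ : V →ₗ[k] V ⊗[k] C} {U : Submodule k V}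

/-- The coaction on a subcomodule. -/
noncomputable def IsSubcomod.restrict (hU : IsSubcomod k C ρ U) : U →ₗ[k] U ⊗[k] C :=
  (LinearEquiv.ofInjective (U.subtype.rTensor C)
      (Module.Flat.rTensor_preserves_injective_linearMap _ U.injective_subtype)).symm.toLinearMap ∘ₗ
    (ρ ∘ₗ U.subtype).codRestrict _ fun u => hU u u.2

lemma IsSubcomod.isComodHom_subtype (hU : IsSubcomod k C ρ U) :
    IsComodHom k C hU.restrict ρ U.subtype := by
  ext u
  exact (LinearEquiv.ofInjective_symm_apply (U.subtype.rTensor C)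
    (h := Module.Flat.rTensor_preserves_injective_linearMap _ U.injective_subtype)
    ⟨ρ u, hU u u.2⟩).symm

lemma IsSimpleSubcomod.isSimpleComod_restrict (hU : IsSimpleSubcomod k C ρ U) :
    IsSimpleComod k C hU.1.restrict := by
  refine ⟨isSubcomod_top _, ?_, fun U' _ hU' => ?_⟩
  · have := (Submodule.nontrivial_iff_ne_bot).mpr hU.2.1
    exact top_ne_bot
  · have hinj := Submodule.map_injective_of_injective U.injective_subtype
    rcases hU.2.2 _ (U.map_subtype_le U') (hU'.map hU.1.isComodHom_subtype) with h | h
    · exact Or.inl (hinj (h.trans (Submodule.map_bot _).symm))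
    · exact Or.inr (hinj (h.trans U.map_subtype_top.symm))

variable [Coalgebra k C]

/-- A simple subcomodule as a bundled simple comodule. -/
noncomputable def IsSimpleSubcomod.toSimpleComodule (hU : IsSimpleSubcomod k C ρ U)
    (hρ : IsComod k C ρ) : SimpleComodule k C where
  V := U
  ρ := hU.1.restrict
  isComod := hU.1.isComodHom_subtype.isComod_of_injective U.injective_subtype hρ
  isSimple := hU.isSimpleComod_restrict

end Restrict

section Cosemisimple

variable {k : Type u} [Field k] {C : Type u} [AddCommGroup C] [Module k C]
variable {V W X : Type u} [AddCommGroup V] [Module k V] [AddCommGroup W] [Module k W]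
  [AddCommGroup X] [Module k X]
variable {ρ : V →ₗ[k] V ⊗[k] C} {ρX : X →ₗ[k] X ⊗[k] C}

lemma isComodHom_of_forall_comp_subtype {ι : Type u} {U : ι → Submodule k V}
    (hU : ∀ i, IsSubcomod k C ρ (U i)) (htop : ⨆ i, U i = ⊤) {f : V →ₗ[k] X}
    (hf : ∀ i, IsComodHom k C (hU i).restrict ρX (f ∘ₗ (U i).subtype)) :
    IsComodHom k C ρ ρX f := by
  refine LinearMap.eqLocus_eq_top.mp (top_le_iff.mp (htop ▸ iSup_le fun i u hu => ?_))
  have hi := hf i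
  rw [IsComodHom, LinearMap.rTensor_comp, LinearMap.comp_assoc (hU i).restrict,
    ← (hU i).isComodHom_subtype] at hi
  exact LinearMap.congr_fun hi ⟨u, hu⟩

lemma isComodHom_component {ι : Type u} [DecidableEq ι] {U : ι → Submodule k V}
    [DirectSum.Decomposition U] (hU : ∀ i, IsSubcomod k C ρ (U i)) (i : ι) :
    IsComodHom k C ρ (hU i).restrict (DirectSum.component k ι (fun i => U i) i ∘ₗ
      (DirectSum.decomposeLinearEquiv U).toLinearMap) := by
  have htop := (DirectSum.Decomposition.isInternal U).submodule_iSup_eq_top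
  refine isComodHom_of_forall_comp_subtype hU htop fun j => ?_
  have hlof : (DirectSum.decomposeLinearEquiv U).toLinearMap ∘ₗ (U j).subtype =
      DirectSum.lof k ι (fun i => U i) j :=
    LinearMap.ext fun u => DirectSum.decomposeLinearEquiv_apply_coe U j u
  rw [LinearMap.comp_assoc, hlof]
  obtain rfl | hij := eq_or_ne j i
  · rw [DirectSum.component_comp_lof_same]
    exact isComodHom_id _
  · have hzero : DirectSum.component k ι (fun i => U i) i ∘ₗ
        DirectSum.lof k ι (fun i => U i) j = 0 := by
      ext u
      rw [LinearMap.comp_apply, DirectSum.component.of, dif_neg hij, LinearMap.zero_apply]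
    rw [hzero, IsComodHom, LinearMap.comp_zero, LinearMap.rTensor_zero, LinearMap.zero_comp]

variable [Coalgebra k C]

lemma IsCosemisimple.exists_simple_comp_ne_zero (hC : IsCosemisimple k C) (hρ : IsComod k C ρ)
    {g : V →ₗ[k] W} (hg : g ≠ 0) :
    ∃ (Y : SimpleComodule k C) (j : Y.V →ₗ[k] V), IsComodHom k C Y.ρ ρ j ∧ g ∘ₗ j ≠ 0 := by
  obtain ⟨ι, U, hU, -, htop⟩ := hC V ρ hρ
  obtain ⟨i, hi⟩ : ∃ i, ¬ U i ≤ LinearMap.ker g := by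
    by_contra! h
    exact hg (LinearMap.ker_eq_top.mp (top_le_iff.mp (htop ▸ iSup_le h)))
  refine ⟨(hU i).toSimpleComodule hρ, (U i).subtype, (hU i).1.isComodHom_subtype, fun h => hi ?_⟩
  exact fun v hv => LinearMap.congr_fun h ⟨v, hv⟩

lemma IsCosemisimple.exists_simple_quotients (hC : IsCosemisimple k C) (hρ : IsComod k C ρ) :
    ∃ (ι : Type u) (Y : ι → SimpleComodule k C) (p : ∀ i, V →ₗ[k] (Y i).V),
      (∀ i, IsComodHom k C ρ (Y i).ρ (p i)) ∧ ⨅ i, LinearMap.ker (p i) = ⊥ ∧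
      (Module.Finite k V → Finite ι) := by
  classical
  obtain ⟨ι, U, hU, hind, htop⟩ := hC V ρ hρ
  have hint := DirectSum.isInternal_submodule_of_iSupIndep_of_iSup_eq_top hind htop
  let := hint.chooseDecomposition
  refine ⟨ι, fun i => (hU i).toSimpleComodule hρ, _,
    isComodHom_component fun i => (hU i).1, ?_, fun _ => ?_⟩
  · refine (Submodule.eq_bot_iff _).mpr fun v hv => ?_
    refine (DirectSum.decomposeLinearEquiv U).map_eq_zero_iff.mp (DFinsupp.ext fun i => ?_)
    exact (Submodule.mem_iInf _).mp hv i
  · have hfin := WellFoundedGT.finite_ne_bot_of_iSupIndep hind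
    exact Set.finite_univ_iff.mp (hfin.subset fun i _ => (hU i).2.1)

lemma IsSimpleComod.exists_linearEquiv_of_iInf_ker_eq_bot {ι : Type u}
    {Y : ι → SimpleComodule k C} {p : ∀ i, V →ₗ[k] (Y i).V}
    (hp : ∀ i, IsComodHom k C ρ (Y i).ρ (p i)) (hker : ⨅ i, LinearMap.ker (p i) = ⊥)
    (hX : IsSimpleComod k C ρX) {f : X →ₗ[k] V} (hf : IsComodHom k C ρX ρ f) (hne : f ≠ 0) :
    ∃ (i : ι) (e : X ≃ₗ[k] (Y i).V), e.toLinearMap = p i ∘ₗ f := by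
  obtain ⟨i, hi⟩ : ∃ i, p i ∘ₗ f ≠ 0 := by
    by_contra! h
    refine hne (LinearMap.range_eq_bot.mp (le_bot_iff.mp (hker ▸ le_iInf fun i => ?_)))
    exact LinearMap.range_le_ker_iff.mpr (h i)
  exact ⟨i, hX.exists_linearEquiv (Y i).isSimple ((hp i).comp hf) hi⟩

lemma IsCosemisimple.isConstituent_iff_exists_quotient (hC : IsCosemisimple k C)
    (hρ : IsComod k C ρ) (hX : IsSimpleComod k C ρX) :
    IsConstituent k C ρX ρ ↔ ∃ g : V →ₗ[k] X, g ≠ 0 ∧ IsComodHom k C ρ ρX g := by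
  constructor
  · rintro ⟨f, hne, hf⟩
    obtain ⟨ι, Y, p, hp, hker, -⟩ := hC.exists_simple_quotients hρ
    obtain ⟨i, e, he⟩ := hX.exists_linearEquiv_of_iInf_ker_eq_bot hp hker hf hne
    have hcomp : (e.symm.toLinearMap ∘ₗ p i) ∘ₗ f = LinearMap.id := by
      rw [LinearMap.comp_assoc, ← he, e.symm_comp]
    refine ⟨e.symm.toLinearMap ∘ₗ p i, fun h => ?_, .comp (.symm (he ▸ (hp i).comp hf)) (hp i)⟩
    have := hX.nontrivial
    exact one_ne_zero (hcomp.symm.trans (by rw [h, LinearMap.zero_comp]))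
  · rintro ⟨g, hne, hg⟩
    obtain ⟨Y, j, hj, hgj⟩ := hC.exists_simple_comp_ne_zero hρ hne
    obtain ⟨e, he⟩ := Y.isSimple.exists_linearEquiv hX (hg.comp hj) hgj
    have hcomp : g ∘ₗ j ∘ₗ e.symm.toLinearMap = LinearMap.id := by
      rw [← LinearMap.comp_assoc, ← he, e.comp_symm]
    refine ⟨j ∘ₗ e.symm.toLinearMap, fun h => ?_, hj.comp (.symm (he ▸ hg.comp hj))⟩
    have := hX.nontrivial
    exact one_ne_zero (hcomp.symm.trans (by rw [h, LinearMap.comp_zero]))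

lemma IsConstituent.of_comodIsoRel {X Y : SimpleComodule k C} (h : comodIsoRel k C X Y)
    (hY : IsConstituent k C Y.ρ ρ) : IsConstituent k C X.ρ ρ := by
  obtain ⟨e, he⟩ := h
  obtain ⟨f, hne, hf⟩ := hY
  refine ⟨f ∘ₗ e.toLinearMap, fun h0 => hne ?_, hf.comp he⟩
  rw [← f.comp_id, ← e.comp_symm, ← LinearMap.comp_assoc, h0, LinearMap.zero_comp]

lemma isConstituent_congr {X Y : SimpleComodule k C} (h : X.cls = Y.cls) :
    IsConstituent k C X.ρ ρ ↔ IsConstituent k C Y.ρ ρ := by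
  have hiso (X Y : SimpleComodule k C) (h : comodIsoRel k C X Y) :
      IsConstituent k C X.ρ ρ = IsConstituent k C Y.ρ ρ :=
    propext ⟨.of_comodIsoRel ⟨h.choose.symm, h.choose_spec.symm⟩, .of_comodIsoRel h⟩
  exact iff_of_eq <|
    congrArg (Quot.lift (fun X : SimpleComodule k C => IsConstituent k C X.ρ ρ) hiso) h

lemma IsCosemisimple.finite_constituents (hC : IsCosemisimple k C) (hρ : IsComod k C ρ)
    [Module.Finite k V] :
    {x | ∃ X : SimpleComodule k C, X.cls = x ∧ IsConstituent k C X.ρ ρ}.Finite := by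
  obtain ⟨ι, Y, p, hp, hker, hfin⟩ := hC.exists_simple_quotients hρ
  have := hfin ‹_›
  refine (Set.finite_range fun i => (Y i).cls).subset ?_
  rintro _ ⟨X, rfl, f, hne, hf⟩
  obtain ⟨i, e, he⟩ := X.isSimple.exists_linearEquiv_of_iInf_ker_eq_bot hp hker hf hne
  exact ⟨i, (Quot.sound ⟨e, he ▸ (hp i).comp hf⟩).symm⟩

end Cosemisimple

section Corestriction

variable {k : Type u} [Field k] {C D : Type u} [AddCommGroup C] [Module k C]
  [AddCommGroup D] [Module k D]
variable {V W : Type u} [AddCommGroup V] [Module k V] [AddCommGroup W] [Module k W]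
variable {ρV : V →ₗ[k] V ⊗[k] C} {ρW : W →ₗ[k] W ⊗[k] C} {f : V →ₗ[k] W}

lemma IsComodHom.cores (hf : IsComodHom k C ρV ρW f) (π : C →ₗ[k] D) :
    IsComodHom k D (cores k C π ρV) (cores k C π ρW) f := by
  rw [IsComodHom, QG.cores, QG.cores, LinearMap.comp_assoc, hf, ← LinearMap.comp_assoc,
    LinearMap.lTensor_comp_rTensor, ← LinearMap.rTensor_comp_lTensor, LinearMap.comp_assoc]

variable [Coalgebra k C] [Coalgebra k D] {F : Type*} [FunLike F C D] [CoalgHomClass F k C D]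

lemma isComodHom_lTensor_cofree (π : F) :
    IsComodHom k D (cores k C (π : C →ₗ[k] D) (cofree C W)) (cofree D W)
      ((π : C →ₗ[k] D).lTensor W) := by
  have hassoc : (TensorProduct.assoc k W D D).symm.toLinearMap ∘ₗ
      (TensorProduct.map (π : C →ₗ[k] D) π).lTensor W =
      ((π : C →ₗ[k] D).lTensor W).rTensor D ∘ₗ (π : C →ₗ[k] D).lTensor (W ⊗[k] C) ∘ₗ
        (TensorProduct.assoc k W C C).symm.toLinearMap :=
    TensorProduct.ext_threefold' fun _ _ _ => rfl
  rw [IsComodHom, cofree, cofree, cores, LinearMap.comp_assoc, ← LinearMap.lTensor_comp,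
    ← CoalgHomClass.map_comp_comul, LinearMap.lTensor_comp, ← LinearMap.comp_assoc, hassoc]
  simp only [LinearMap.comp_assoc]

lemma cofreeCounit_comp_lTensor (π : F) :
    cofreeCounit D W ∘ₗ (π : C →ₗ[k] D).lTensor W = cofreeCounit C W := by
  rw [cofreeCounit, cofreeCounit, LinearMap.comp_assoc, ← LinearMap.lTensor_comp,
    CoalgHomClass.counit_comp]

lemma IsComod.cores (hV : IsComod k C ρV) (π : F) :
    IsComod k D (cores k C (π : C →ₗ[k] D) ρV) := by
  refine isComod_iff.mpr ⟨?_, ?_⟩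
  · exact (isComodHom_lTensor_cofree π).comp (hV.isComodHom_cofree.cores _)
  · rw [QG.cores, ← LinearMap.comp_assoc, cofreeCounit_comp_lTensor, (isComod_iff.mp hV).2]

end Corestriction

section CoeffMatrix

variable {k : Type u} [Field k] {C : Type u} [AddCommGroup C] [Module k C]
variable {V W X : Type u} [AddCommGroup V] [Module k V] [AddCommGroup W] [Module k W]
  [AddCommGroup X] [Module k X]
variable {I J K : Type*} [DecidableEq J]

/-- The matrix `c` of coefficients of a linear map `g : V → W ⊗ C` in bases `b` of `V` and `b'` of
`W`, so that `g (b j) = ∑ i, b' i ⊗ₜ c i j`. For a coaction `g` on `V = W` with `b = b'` this is the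
usual coefficient matrix. -/
noncomputable def coeffMatrix (b : Module.Basis I k V) (b' : Module.Basis J k W)
    (g : V →ₗ[k] W ⊗[k] C) : Matrix J I C :=
  Matrix.of fun i j => TensorProduct.equivFinsuppOfBasisLeft b' (g (b j)) i

variable (b : Module.Basis I k V) (b' : Module.Basis J k W) {g : V →ₗ[k] W ⊗[k] C}

lemma coeffMatrix_injective :
    Function.Injective (coeffMatrix b b' : (V →ₗ[k] W ⊗[k] C) → Matrix J I C) := fun _ _ h =>
  b.ext fun j => (TensorProduct.equivFinsuppOfBasisLeft b').injective <|
    Finsupp.ext fun i => congrFun₂ h i j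

lemma apply_basis_eq_sum_coeffMatrix [Fintype J] (j : I) :
    g (b j) = ∑ i, b' i ⊗ₜ[k] coeffMatrix b b' g i j := by
  rw [← (TensorProduct.equivFinsuppOfBasisLeft b').symm_apply_apply (g (b j)),
    TensorProduct.equivFinsuppOfBasisLeft_symm_apply,
    Finsupp.sum_fintype _ _ fun i => tmul_zero _ _]
  rfl

lemma coeffMatrix_lTensor_comp {D : Type u} [AddCommGroup D] [Module k D] (π : C →ₗ[k] D) :
    coeffMatrix b b' (π.lTensor W ∘ₗ g) = (coeffMatrix b b' g).map π := by
  ext i j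
  simp only [coeffMatrix, Matrix.of_apply, Matrix.map_apply, LinearMap.comp_apply]
  induction g (b j) with
  | zero => simp
  | tmul w c => simp
  | add s t hs ht => simp only [map_add, Finsupp.add_apply, hs, ht]

section Algebra

variable {R : Type u} [Ring R] [Algebra k R]

lemma coeffMatrix_comp [Fintype I] [Fintype K] [DecidableEq K]
    (b'' : Module.Basis K k X) (g : V →ₗ[k] W ⊗[k] R) (f : X →ₗ[k] V) :
    coeffMatrix b'' b' (g ∘ₗ f) =
      coeffMatrix b b' g * (LinearMap.toMatrix b'' b f).map (algebraMap k R) := by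
  ext a j
  simp only [coeffMatrix, Matrix.of_apply, Matrix.mul_apply, Matrix.map_apply,
    LinearMap.comp_apply, LinearMap.toMatrix_apply, ← Algebra.commutes (_ : k) (_ : R),
    ← Algebra.smul_def]
  conv_lhs => rw [← b.sum_repr (f (b'' j))]
  simp only [map_sum, map_smul, Finsupp.finsetSum_apply, Finsupp.smul_apply]

lemma coeffMatrix_rTensor_comp [Fintype J] [DecidableEq K]
    (b'' : Module.Basis K k X) [Finite K] (f : W →ₗ[k] X) (g : V →ₗ[k] W ⊗[k] R) :
    coeffMatrix b b'' (f.rTensor R ∘ₗ g) =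
      (LinearMap.toMatrix b' b'' f).map (algebraMap k R) * coeffMatrix b b' g := by
  ext a j
  simp only [Matrix.mul_apply, Matrix.map_apply, ← Algebra.smul_def, LinearMap.toMatrix_apply]
  rw [coeffMatrix, Matrix.of_apply, LinearMap.comp_apply, apply_basis_eq_sum_coeffMatrix b b']
  simp only [map_sum, LinearMap.rTensor_tmul, Finsupp.finsetSum_apply,
    TensorProduct.equivFinsuppOfBasisLeft_apply_tmul_apply]

lemma isComodHom_iff [Fintype I] [DecidableEq I] [Fintype J]
    {ρV : V →ₗ[k] V ⊗[k] R} {ρW : W →ₗ[k] W ⊗[k] R} {f : V →ₗ[k] W} :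
    IsComodHom k R ρV ρW f ↔
      coeffMatrix b' b' ρW * (LinearMap.toMatrix b b' f).map (algebraMap k R) =
        (LinearMap.toMatrix b b' f).map (algebraMap k R) * coeffMatrix b b ρV := by
  rw [← coeffMatrix_comp, ← coeffMatrix_rTensor_comp, (coeffMatrix_injective b b').eq_iff,
    IsComodHom]

end Algebra

variable [Coalgebra k C]

variable (k) in
/-- A multiplicative matrix over a coalgebra, in the sense of Manin: `Δ(cᵢⱼ) = ∑ₗ cᵢₗ ⊗ cₗⱼ` and
`ε(cᵢⱼ) = δᵢⱼ`. These are the coefficient matrices of comodules. -/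
structure IsMultiplicative [Fintype J] (c : Matrix J J C) : Prop where
  comul : ∀ i j, Coalgebra.comul (R := k) (c i j) = ∑ l, c i l ⊗ₜ[k] c l j
  counit : ∀ i j, Coalgebra.counit (R := k) (c i j) = (1 : Matrix J J k) i j

lemma IsComod.isMultiplicative_coeffMatrix [Fintype J] {ρ : W →ₗ[k] W ⊗[k] C}
    (hρ : IsComod k C ρ) : IsMultiplicative k (coeffMatrix b' b' ρ) where
  comul i j := by
    have h := congrArg (TensorProduct.assoc k W C C) (hρ.coassoc (b' j))
    rw [LinearEquiv.coe_coe, LinearEquiv.apply_symm_apply] at h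
    rw [apply_basis_eq_sum_coeffMatrix b' b'] at h
    simp only [map_sum, LinearMap.rTensor_tmul, LinearMap.lTensor_tmul,
      apply_basis_eq_sum_coeffMatrix b' b', sum_tmul, TensorProduct.assoc_tmul] at h
    have hi := DFunLike.congr_fun (congrArg (TensorProduct.equivFinsuppOfBasisLeft b') h) i
    simpa [Finsupp.single_apply] using hi.symm
  counit i j := by
    have h := hρ.counit (b' j)
    rw [apply_basis_eq_sum_coeffMatrix b' b'] at h
    simp only [map_sum, LinearMap.lTensor_tmul, TensorProduct.rid_tmul] at h
    have hi := DFunLike.congr_fun (congrArg b'.repr h) i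
    simpa [Finsupp.single_apply, Matrix.one_apply, eq_comm] using hi

end CoeffMatrix

section QuotientSpace

variable {k : Type u} [Field k] {A H B : Type u} [AddCommGroup A] [Module k A] [Coalgebra k A]
  [Ring H] [Bialgebra k H] [AddCommGroup B] [Module k B] [One B] {π : H →ₗ[k] B}

lemma mem_quotientSpaceLeft {x : H} : x ∈ quotientSpaceLeft k H π ↔
    π.lTensor H (Coalgebra.comul (R := k) x) = x ⊗ₜ[k] (1 : B) :=
  LinearMap.mem_ker.trans sub_eq_zero

lemma mem_quotientSpaceRight {x : H} : x ∈ quotientSpaceRight k H π ↔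
    π.rTensor H (Coalgebra.comul (R := k) x) = (1 : B) ⊗ₜ[k] x :=
  LinearMap.mem_ker.trans sub_eq_zero

lemma map_eq_counit_smul_of_mem_quotientSpaceLeft {x : H} (hx : x ∈ quotientSpaceLeft k H π) :
    π x = Coalgebra.counit (R := k) x • (1 : B) := by
  have h := congrArg ((TensorProduct.lid k B).toLinearMap ∘ₗ Coalgebra.counit.rTensor B)
    (mem_quotientSpaceLeft.mp hx)
  have hcomm : Coalgebra.counit.rTensor B (π.lTensor H (Coalgebra.comul (R := k) x)) =
      π.lTensor k (Coalgebra.counit.rTensor H (Coalgebra.comul (R := k) x)) := by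
    rw [← LinearMap.comp_apply, LinearMap.rTensor_comp_lTensor, ← LinearMap.lTensor_comp_rTensor,
      LinearMap.comp_apply]
  simpa [hcomm] using h

lemma quotientSpaceLeft_le_quotientSpaceRight {F : Type*} [FunLike F A H] [CoalgHomClass F k A H]
    (ι : F) (hι : LinearMap.range (ι : A →ₗ[k] H) = quotientSpaceLeft k H π) :
    quotientSpaceLeft k H π ≤ quotientSpaceRight k H π := by
  have hπι : π ∘ₗ (ι : A →ₗ[k] H) = LinearMap.toSpanSingleton k B 1 ∘ₗ Coalgebra.counit := by
    ext a
    have ha : (ι : A →ₗ[k] H) a ∈ quotientSpaceLeft k H π := hι ▸ LinearMap.mem_range_self _ a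
    have hε : Coalgebra.counit (R := k) ((ι : A →ₗ[k] H) a) = Coalgebra.counit (R := k) a :=
      CoalgHomClass.counit_comp_apply ι a
    rw [LinearMap.comp_apply, map_eq_counit_smul_of_mem_quotientSpaceLeft ha, hε]
    rfl
  intro x hx
  obtain ⟨a, rfl⟩ := hι.symm ▸ hx
  refine mem_quotientSpaceRight.mpr ?_
  calc π.rTensor H (Coalgebra.comul (R := k) ((ι : A →ₗ[k] H) a))
      = π.rTensor H (TensorProduct.map (ι : A →ₗ[k] H) ι (Coalgebra.comul (R := k) a)) :=
        congrArg _ (CoalgHomClass.map_comp_comul_apply ι a).symm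
    _ = TensorProduct.map (LinearMap.toSpanSingleton k B 1) ι
          (Coalgebra.counit.rTensor A (Coalgebra.comul (R := k) a)) := by
        rw [← LinearMap.comp_apply, LinearMap.rTensor_comp_map, hπι, ← LinearMap.map_comp_rTensor,
          LinearMap.comp_apply]
    _ = (1 : B) ⊗ₜ[k] (ι : A →ₗ[k] H) a := by
        rw [Coalgebra.rTensor_counit_comul, TensorProduct.map_tmul,
          LinearMap.toSpanSingleton_apply, one_smul]

end QuotientSpace

section MultiplicativeMatrix

variable {k : Type u} [Field k] {R S : Type u} [Ring R] [Algebra k R] [Ring S] [Algebra k S]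
variable {H B : Type u} [Ring H] [HopfAlgebra k H] [Ring B] [Algebra k B]
variable {I J : Type*}

lemma matrix_map_algebraMap_map (F : Matrix J I k) (φ : R →ₐ[k] S) :
    (F.map (algebraMap k R)).map φ = F.map (algebraMap k S) := by
  ext i j
  exact φ.commutes (F i j)

variable [Fintype I] [DecidableEq I]

lemma matrix_map_mul_map_eq_one {P Q : Matrix I I R} (h : P * Q = 1) (φ : R →ₐ[k] S) :
    P.map φ * Q.map φ = 1 := by
  rw [← Matrix.map_mul, h, Matrix.map_one φ (map_zero φ) (map_one φ)]

lemma matrix_eq_of_mul_eq_mul {P Q : Matrix I I R} (hPQ : P * Q = 1) {M N : Matrix J I R}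
    (h : M * P = N * P) : M = N := by
  rw [← M.mul_one, ← hPQ, ← Matrix.mul_assoc, h, Matrix.mul_assoc, hPQ, N.mul_one]

variable {c : Matrix I I H} {d : Matrix J J H} {F : Matrix J I k} {π : H →ₐ[k] B}

lemma IsMultiplicative.map_antipode_mul (hc : IsMultiplicative k c) :
    c.map (HopfAlgebra.antipode k) * c = 1 := by
  ext i j
  have h := HopfAlgebra.mul_antipode_rTensor_comul_apply (R := k) (c i j)
  rw [hc.comul, hc.counit] at h
  simp only [map_sum, LinearMap.rTensor_tmul, LinearMap.mul'_apply] at h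
  rw [Matrix.mul_apply, ← Matrix.map_one (algebraMap k H) (map_zero _) (map_one _)]
  exact h

lemma IsMultiplicative.mul_map_antipode (hc : IsMultiplicative k c) :
    c * c.map (HopfAlgebra.antipode k) = 1 := by
  ext i j
  have h := HopfAlgebra.mul_antipode_lTensor_comul_apply (R := k) (c i j)
  rw [hc.comul, hc.counit] at h
  simp only [map_sum, LinearMap.lTensor_tmul, LinearMap.mul'_apply] at h
  rw [Matrix.mul_apply, ← Matrix.map_one (algebraMap k H) (map_zero _) (map_one _)]
  exact h

lemma IsMultiplicative.map_tensorMap_comul (hc : IsMultiplicative k c) (φ : H →ₐ[k] R)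
    (ψ : H →ₐ[k] S) :
    c.map ((Algebra.TensorProduct.map φ ψ).comp (Bialgebra.comulAlgHom k H)) =
      (c.map φ).map (Algebra.TensorProduct.includeLeft : R →ₐ[k] R ⊗[k] S) *
        (c.map ψ).map (Algebra.TensorProduct.includeRight : S →ₐ[k] R ⊗[k] S) := by
  ext i j
  simp [hc.comul, Matrix.mul_apply]

/-- The matrix `d F S(c)`, whose entries are the coefficients of `F` under the `H`-coaction on
`Hom(V, W)` for comodules `V` and `W` with coefficient matrices `c` and `d`. -/
noncomputable def homCoaction [Fintype J] (d : Matrix J J H) (F : Matrix J I k)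
    (c : Matrix I I H) : Matrix J I H :=
  d * F.map (algebraMap k H) * c.map (HopfAlgebra.antipode k)

lemma IsMultiplicative.homCoaction_mul [Fintype J] (hc : IsMultiplicative k c) :
    homCoaction d F c * c = d * F.map (algebraMap k H) := by
  rw [homCoaction, Matrix.mul_assoc, hc.map_antipode_mul, Matrix.mul_one]

variable [Fintype J] [DecidableEq J]

lemma homCoaction_mem_quotientSpaceLeft (hc : IsMultiplicative k c) (hd : IsMultiplicative k d)
    (hF : d.map π * F.map (algebraMap k B) = F.map (algebraMap k B) * c.map π) (a : J) (i : I) :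
    homCoaction d F c a i ∈ quotientSpaceLeft k H π.toLinearMap := by
  let δ : H →ₐ[k] H ⊗[k] B :=
    (Algebra.TensorProduct.map (.id k H) π).comp (Bialgebra.comulAlgHom k H)
  let L : H →ₐ[k] H ⊗[k] B := Algebra.TensorProduct.includeLeft
  let R : B →ₐ[k] H ⊗[k] B := Algebra.TensorProduct.includeRight
  have hcδ : c.map δ = c.map L * (c.map π).map R := hc.map_tensorMap_comul (.id k H) π
  have hdδ : d.map δ = d.map L * (d.map π).map R := hd.map_tensorMap_comul (.id k H) π
  suffices h : (homCoaction d F c).map δ = (homCoaction d F c).map L from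
    mem_quotientSpaceLeft.mpr (congrFun₂ h a i)
  refine matrix_eq_of_mul_eq_mul (matrix_map_mul_map_eq_one hc.mul_map_antipode δ) ?_
  calc (homCoaction d F c).map δ * c.map δ
      = d.map δ * F.map (algebraMap k (H ⊗[k] B)) := by
        rw [← Matrix.map_mul, hc.homCoaction_mul, Matrix.map_mul, matrix_map_algebraMap_map]
    _ = d.map L * (d.map π * F.map (algebraMap k B)).map R := by
        rw [hdδ, Matrix.map_mul, matrix_map_algebraMap_map, Matrix.mul_assoc]
    _ = (d * F.map (algebraMap k H)).map L * (c.map π).map R := by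
        rw [hF, Matrix.map_mul, Matrix.map_mul, matrix_map_algebraMap_map,
          matrix_map_algebraMap_map, Matrix.mul_assoc]
    _ = (homCoaction d F c).map L * c.map δ := by
        rw [← hc.homCoaction_mul, Matrix.map_mul, hcδ, Matrix.mul_assoc]

lemma map_mul_homCoaction_of_mem_quotientSpaceRight (hc : IsMultiplicative k c)
    (hd : IsMultiplicative k d)
    (hmem : ∀ a i, homCoaction d F c a i ∈ quotientSpaceRight k H π.toLinearMap) :
    (d.map π).map (Algebra.TensorProduct.includeLeft : B →ₐ[k] B ⊗[k] H) *
        (homCoaction d F c).map (Algebra.TensorProduct.includeRight : H →ₐ[k] B ⊗[k] H) =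
      (homCoaction d F c).map (Algebra.TensorProduct.includeRight : H →ₐ[k] B ⊗[k] H) *
        (c.map π).map (Algebra.TensorProduct.includeLeft : B →ₐ[k] B ⊗[k] H) := by
  let δ : H →ₐ[k] B ⊗[k] H :=
    (Algebra.TensorProduct.map π (.id k H)).comp (Bialgebra.comulAlgHom k H)
  let L : B →ₐ[k] B ⊗[k] H := Algebra.TensorProduct.includeLeft
  let R : H →ₐ[k] B ⊗[k] H := Algebra.TensorProduct.includeRight
  have hcδ : c.map δ = (c.map π).map L * c.map R := hc.map_tensorMap_comul π (.id k H)
  have hdδ : d.map δ = (d.map π).map L * d.map R := hd.map_tensorMap_comul π (.id k H)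
  have hx : (homCoaction d F c).map δ = (homCoaction d F c).map R :=
    Matrix.ext fun a i => mem_quotientSpaceRight.mp (hmem a i)
  refine matrix_eq_of_mul_eq_mul (matrix_map_mul_map_eq_one hc.mul_map_antipode R) ?_
  calc (d.map π).map L * (homCoaction d F c).map R * c.map R
      = (d.map π).map L * (d * F.map (algebraMap k H)).map R := by
        rw [Matrix.mul_assoc, ← Matrix.map_mul, hc.homCoaction_mul]
    _ = (d * F.map (algebraMap k H)).map δ := by
        rw [Matrix.map_mul, Matrix.map_mul, hdδ, matrix_map_algebraMap_map,
          matrix_map_algebraMap_map, Matrix.mul_assoc]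
    _ = (homCoaction d F c).map R * (c.map π).map L * c.map R := by
        rw [← hc.homCoaction_mul, Matrix.map_mul, hx, hcδ, Matrix.mul_assoc]

lemma map_mul_map_dual_homCoaction (hc : IsMultiplicative k c) (hd : IsMultiplicative k d)
    (hmem : ∀ a i, homCoaction d F c a i ∈ quotientSpaceRight k H π.toLinearMap)
    (φ : Module.Dual k H) :
    d.map π * ((homCoaction d F c).map φ).map (algebraMap k B) =
      ((homCoaction d F c).map φ).map (algebraMap k B) * c.map π := by
  ext a i
  have h := congrArg ((TensorProduct.rid k B).toLinearMap ∘ₗ φ.lTensor B)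
    (congrFun₂ (map_mul_homCoaction_of_mem_quotientSpaceRight hc hd hmem) a i)
  simp only [Matrix.mul_apply, Matrix.map_apply, Algebra.TensorProduct.includeLeft_apply,
    Algebra.TensorProduct.includeRight_apply, Algebra.TensorProduct.tmul_mul_tmul, one_mul,
    mul_one, map_sum, LinearMap.comp_apply, LinearMap.lTensor_tmul, LinearEquiv.coe_coe,
    TensorProduct.rid_tmul] at h
  simpa only [Matrix.mul_apply, Matrix.map_apply, ← Algebra.commutes (_ : k) (_ : B),
    ← Algebra.smul_def] using h

end MultiplicativeMatrix

section HomCoaction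

variable {k : Type u} [Field k]
variable {H B : Type u} [Ring H] [HopfAlgebra k H] [Ring B] [Algebra k B] {π : H →ₐ[k] B}
variable {V W Z : Type u} [AddCommGroup V] [Module k V] [AddCommGroup W] [Module k W]
  [AddCommGroup Z] [Module k Z]
variable {ρV : V →ₗ[k] V ⊗[k] H} {ρW : W →ₗ[k] W ⊗[k] H} {f : V →ₗ[k] W}

lemma isComodHom_toLin_homCoaction {I J : Type*} [Fintype I] [DecidableEq I] [Fintype J]
    [DecidableEq J] (b : Module.Basis I k V) (b' : Module.Basis J k W)
    (hπ : quotientSpaceLeft k H π.toLinearMap ≤ quotientSpaceRight k H π.toLinearMap)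
    (hV : IsComod k H ρV) (hW : IsComod k H ρW)
    (hf : IsComodHom k B (cores k H π.toLinearMap ρV) (cores k H π.toLinearMap ρW) f)
    (φ : Module.Dual k H) :
    IsComodHom k B (cores k H π.toLinearMap ρV) (cores k H π.toLinearMap ρW)
      (Matrix.toLin b b' ((homCoaction (coeffMatrix b' b' ρW) (LinearMap.toMatrix b b' f)
        (coeffMatrix b b ρV)).map φ)) := by
  have hc := hV.isMultiplicative_coeffMatrix b
  have hd := hW.isMultiplicative_coeffMatrix b'
  rw [isComodHom_iff b b', cores, cores, coeffMatrix_lTensor_comp, coeffMatrix_lTensor_comp] at hf ⊢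
  rw [LinearMap.toMatrix_toLin]
  exact map_mul_map_dual_homCoaction hc hd
    (fun a i => hπ (homCoaction_mem_quotientSpaceLeft hc hd hf a i)) φ

lemma IsSimpleComod.exists_isComodHom_comp_ne_zero [Module.Finite k V] [Module.Finite k Z]
    (hπ : quotientSpaceLeft k H π.toLinearMap ≤ quotientSpaceRight k H π.toLinearMap)
    (hWs : IsSimpleComod k H ρW) (hV : IsComod k H ρV) (hW : IsComod k H ρW)
    (hf : IsComodHom k B (cores k H π.toLinearMap ρV) (cores k H π.toLinearMap ρW) f)
    (hne : f ≠ 0) {γ : W →ₗ[k] Z} (hγ : γ ≠ 0) :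
    ∃ f' : V →ₗ[k] W,
      IsComodHom k B (cores k H π.toLinearMap ρV) (cores k H π.toLinearMap ρW) f' ∧
        γ ∘ₗ f' ≠ 0 := by
  have := hWs.finite hW
  let b := Module.finBasis k V
  let b' := Module.finBasis k W
  let b'' := Module.finBasis k Z
  let x := homCoaction (coeffMatrix b' b' ρW) (LinearMap.toMatrix b b' f) (coeffMatrix b b ρV)
  let Γ := LinearMap.toMatrix b' b'' γ
  by_contra! hcon
  have hφ (φ : Module.Dual k H) : Γ * x.map φ = 0 := by
    have h := hcon _ (isComodHom_toLin_homCoaction b b' hπ hV hW hf φ)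
    have hmul := LinearMap.toMatrix_comp b b' b'' γ (Matrix.toLin b b' (x.map φ))
    rw [h, LinearMap.toMatrix_toLin, map_zero] at hmul
    exact hmul.symm
  have hx : Γ.map (algebraMap k H) * x = 0 := by
    ext a i
    refine (Module.forall_dual_apply_eq_zero_iff k _).mp fun φ => ?_
    simpa [Matrix.mul_apply, ← Algebra.smul_def] using congrFun₂ (hφ φ) a i
  have hzero : γ.rTensor H ∘ₗ ρW ∘ₗ f = 0 := by
    refine coeffMatrix_injective b b'' ?_
    rw [coeffMatrix_rTensor_comp b b', coeffMatrix_comp b' b',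
      ← (hV.isMultiplicative_coeffMatrix b).homCoaction_mul, ← Matrix.mul_assoc, hx,
      Matrix.zero_mul]
    ext
    simp [coeffMatrix]
  obtain ⟨v, hv⟩ := DFunLike.ne_iff.mp hne
  exact hγ (hWs.eq_zero_of_rTensor_coact_eq_zero hW hv (LinearMap.congr_fun hzero v))

end HomCoaction

section ConstHat

variable {k : Type u} [Field k] {H B : Type u} [Ring H] [HopfAlgebra k H] [Ring B]
  [HopfAlgebra k B] {π : H →ₐc[k] B}

lemma cls_mem_constHat {X : SimpleComodule k B} {U : SimpleComodule k H} :
    X.cls ∈ constHat k π U ↔ IsConstituent k B X.ρ (cores k H (π : H →ₗ[k] B) U.ρ) :=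
  ⟨fun ⟨_, h, hY⟩ => (isConstituent_congr h).mp hY, fun h => ⟨X, rfl, h⟩⟩

lemma IsCosemisimple.constHat_nonempty (hB : IsCosemisimple k B) (U : SimpleComodule k H) :
    (constHat k π U).Nonempty := by
  have := U.isSimple.nontrivial
  obtain ⟨X, j, hj, hne⟩ := hB.exists_simple_comp_ne_zero (U.isComod.cores π)
    (one_ne_zero (α := Module.End k U.V))
  exact ⟨X.cls, X, rfl, j, hne, hj⟩

lemma IsCosemisimple.finite_constHat (hB : IsCosemisimple k B) (U : SimpleComodule k H) :
    (constHat k π U).Finite :=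
  have := U.isSimple.finite U.isComod
  hB.finite_constituents (U.isComod.cores π)

lemma IsCosemisimple.constHat_subset (hB : IsCosemisimple k B)
    (hπ : quotientSpaceLeft k H (π : H →ₗ[k] B) ≤ quotientSpaceRight k H (π : H →ₗ[k] B))
    {U U' : SimpleComodule k H} {x : SimpleComodQuot k B} (hx : x ∈ constHat k π U)
    (hx' : x ∈ constHat k π U') : constHat k π U' ⊆ constHat k π U := by
  rintro _ ⟨Y, rfl, hY⟩
  obtain ⟨X, rfl, hX⟩ := hx
  have := U.isSimple.finite U.isComod
  have := Y.isSimple.finite Y.isComod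
  obtain ⟨q, hq0, hq⟩ :=
    (hB.isConstituent_iff_exists_quotient (U.isComod.cores π) X.isSimple).mp hX
  obtain ⟨i, hi0, hi⟩ := cls_mem_constHat.mp hx'
  obtain ⟨γ, hγ0, hγ⟩ :=
    (hB.isConstituent_iff_exists_quotient (U'.isComod.cores π) Y.isSimple).mp hY
  have hiq : i ∘ₗ q ≠ 0 := fun h =>
    hi0 ((LinearMap.cancel_right (X.isSimple.surjective_of_ne_zero hq hq0)).mp h)
  obtain ⟨f, hf, hγf⟩ := U'.isSimple.exists_isComodHom_comp_ne_zero (π := (π : H →ₐ[k] B)) hπ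
    U.isComod U'.isComod (hi.comp hq) hiq hγ0
  exact cls_mem_constHat.mpr <|
    (hB.isConstituent_iff_exists_quotient (U.isComod.cores π) Y.isSimple).mpr ⟨_, hγf, hγ.comp hf⟩

lemma exists_mem_constHat (hsurj : Function.Surjective π) (hH : IsCosemisimple k H)
    (hB : IsCosemisimple k B) (x : SimpleComodQuot k B) : ∃ U, x ∈ constHat k π U := by
  obtain ⟨X, rfl⟩ := Quot.exists_rep x
  have := X.isSimple.nontrivial
  have hρ : X.ρ ≠ 0 := fun h => by
    obtain ⟨v, hv⟩ := exists_ne (0 : X.V)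
    exact hv (X.isComod.injective (by rw [h, LinearMap.zero_apply, LinearMap.zero_apply]))
  obtain ⟨p, hp0, hp⟩ := (hB.isConstituent_iff_exists_quotient isComod_cofree X.isSimple).mp
    ⟨X.ρ, hρ, X.isComod.isComodHom_cofree⟩
  have hpπ : p ∘ₗ (π : H →ₗ[k] B).lTensor X.V ≠ 0 := fun h =>
    hp0 ((LinearMap.cancel_right (LinearMap.lTensor_surjective X.V hsurj)).mp h)
  obtain ⟨U, j, hj, hne⟩ := hH.exists_simple_comp_ne_zero isComod_cofree hpπ
  exact ⟨U, cls_mem_constHat.mpr <|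
    (hB.isConstituent_iff_exists_quotient (U.isComod.cores π) X.isSimple).mpr
      ⟨_, hne, (hp.comp (isComodHom_lTensor_cofree π)).comp (hj.cores _)⟩⟩

lemma IsCosemisimple.setOf_relSimB_eq_constHat (hB : IsCosemisimple k B)
    (hπ : quotientSpaceLeft k H (π : H →ₗ[k] B) ≤ quotientSpaceRight k H (π : H →ₗ[k] B))
    {U : SimpleComodule k H} {x : SimpleComodQuot k B} (hx : x ∈ constHat k π U) :
    {y | relSimB k π x y} = constHat k π U :=
  Set.Subset.antisymm (fun _ ⟨_, hx', hy⟩ => hB.constHat_subset hπ hx hx' hy)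
    fun _ hy => ⟨U, hx, hy⟩

end ConstHat

end QG

open QG in
theorem statement_11_general {k : Type u} [Field k] {H B : Type u} [Ring H] [HopfAlgebra k H]
    [Ring B] [HopfAlgebra k B] (π : H →ₐc[k] B) (hsurj : Function.Surjective π)
    (hπ : quotientSpaceLeft k H (π : H →ₗ[k] B) ≤ quotientSpaceRight k H (π : H →ₗ[k] B))
    (hH : IsCosemisimple k H) (hB : IsCosemisimple k B) :
    Equivalence (relSimB k π) ∧
    (∀ x : SimpleComodQuot k B, {y | relSimB k π x y}.Finite) ∧
    (∀ x : SimpleComodQuot k B, ∃ U : SimpleComodule k H,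
      {y | relSimB k π x y} = constHat k π U) ∧
    (∀ U : SimpleComodule k H, ∃ x : SimpleComodQuot k B,
      {y | relSimB k π x y} = constHat k π U) := by
  have hclass (x : SimpleComodQuot k B) :
      ∃ U : SimpleComodule k H, {y | relSimB k π x y} = constHat k π U :=
    (exists_mem_constHat hsurj hH hB x).imp fun _ => hB.setOf_relSimB_eq_constHat hπ
  refine ⟨⟨fun x => ?_, ?_, ?_⟩, fun x => ?_, hclass, fun U => ?_⟩
  · exact (exists_mem_constHat hsurj hH hB x).imp fun _ hx => ⟨hx, hx⟩
  · exact fun ⟨U, hx, hy⟩ => ⟨U, hy, hx⟩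
  · rintro x y z ⟨U, hx, hy⟩ hyz
    exact ⟨U, hx, (hB.setOf_relSimB_eq_constHat hπ hy).subset hyz⟩
  · obtain ⟨U, hU⟩ := hclass x
    exact hU ▸ hB.finite_constHat U
  · exact (hB.constHat_nonempty U).imp fun _ => hB.setOf_relSimB_eq_constHat hπ

open QG in
/-- For an exact sequence `k → A → H → B → k` of cosemisimple
Hopf algebras, `∼_B` is an equivalence relation on `B̂` with finite classes,
and the classes are exactly the sets `const(U)`, `U ∈ Ĥ`. -/
theorem statement_11 (k : Type u) [Field k] [IsAlgClosed k]
    (A H B : Type u) [Ring A] [HopfAlgebra k A] [Ring H] [HopfAlgebra k H]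
    [Ring B] [HopfAlgebra k B]
    (ι : A →ₐc[k] H) (π : H →ₐc[k] B)
    (hinj : Function.Injective ι) (hsurj : Function.Surjective π)
    (hexactA : LinearMap.range (ι : A →ₗ[k] H) =
      quotientSpaceLeft k H (π : H →ₗ[k] B))
    (hexactB : LinearMap.ker (π : H →ₗ[k] B) =
      leftIdealGen k (LinearMap.range (ι : A →ₗ[k] H) ⊓
        LinearMap.ker (Coalgebra.counit (R := k) (A := H))))
    (hcssA : IsCosemisimple k A) (hcssH : IsCosemisimple k H)
    (hcssB : IsCosemisimple k B) :
    Equivalence (relSimB k π) ∧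
    (∀ x : SimpleComodQuot k B, {y | relSimB k π x y}.Finite) ∧
    (∀ x : SimpleComodQuot k B, ∃ U : SimpleComodule k H,
      {y | relSimB k π x y} = constHat k π U) ∧
    (∀ U : SimpleComodule k H, ∃ x : SimpleComodQuot k B,
      {y | relSimB k π x y} = constHat k π U) :=
  statement_11_general π hsurj (quotientSpaceLeft_le_quotientSpaceRight ι hexactA) hcssH hcssB
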